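/- arXiv:1812.08397 — 2 statements merged into one kernel-verified Lean document; each statement's English description precedes it below -/
import Mathlib

section
/- Let n ≥ 2 be an integer and S : (L^0)^n → (L^0)^n an injective map with the local property satisfying S(θ) = θ. If x ∈ (L^0)^n has full support, then S(x) has full support. -/
/-!
Statements from "The fundamental theorem of affine geometry in `(L⁰)ⁿ`" (Wu–Long).

`L⁰`, the algebra of equivalence classes (under `P`-a.e. equality) of real valued
random variables on a probability space `(Ω, F, P)`, is modeled as `Ω →ₘ[P] ℝ`,
and `(L⁰)ⁿ` as `Fin n → (Ω →ₘ[P] ℝ)` with the pointwise `L⁰`-module structure.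
-/

open MeasureTheory

noncomputable section

variable {Ω : Type*} [MeasurableSpace Ω] {P : Measure Ω}

/-- `L⁰ = Ω →ₘ[P] ℝ` is a commutative ring under the pointwise a.e. operations. -/
instance : CommRing (Ω →ₘ[P] ℝ) :=
  { (inferInstance : AddCommGroup (Ω →ₘ[P] ℝ)),
    (inferInstance : CommMonoid (Ω →ₘ[P] ℝ)) with
    left_distrib := fun a b c => AEEqFun.toGerm_injective <| by
      simp only [AEEqFun.mul_toGerm, AEEqFun.add_toGerm, mul_add]
    right_distrib := fun a b c => AEEqFun.toGerm_injective <| by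
      simp only [AEEqFun.mul_toGerm, AEEqFun.add_toGerm, add_mul]
    zero_mul := fun a => AEEqFun.toGerm_injective <| by
      simp only [AEEqFun.mul_toGerm, AEEqFun.zero_toGerm, zero_mul]
    mul_zero := fun a => AEEqFun.toGerm_injective <| by
      simp only [AEEqFun.mul_toGerm, AEEqFun.zero_toGerm, mul_zero] }

/-- `Ĩ_A` : the equivalence class of the indicator function of a measurable set `A`. -/
def ind (P : Measure Ω) {A : Set Ω} (hA : MeasurableSet A) : Ω →ₘ[P] ℝ :=
  AEEqFun.mk (A.indicator fun _ => (1 : ℝ)) (aestronglyMeasurable_const.indicator hA)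

section Idempotent

variable {R M N : Type*} [Ring R] [AddCommGroup M] [Module R M] [AddCommGroup N] [Module R N]

-- Locality at `1 - e` kills the `(1 - e)`-part of `S (e • x)`, because `(1 - e) • e • x = 0`.
theorem map_smul_of_isIdempotentElem {S : M → N} (hS0 : S 0 = 0) {e : R}
    (he : IsIdempotentElem e) (hloc : ∀ x, e • S (e • x) = e • S x)
    (hloc_compl : ∀ x, (1 - e) • S ((1 - e) • x) = (1 - e) • S x) (x : M) :
    S (e • x) = e • S x := by
  have compl_part : (1 - e) • S (e • x) = 0 := by
    rw [← hloc_compl, smul_smul, he.one_sub_mul_self, zero_smul, hS0, smul_zero]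
  calc
    S (e • x) = e • S (e • x) + (1 - e) • S (e • x) := by
      rw [← add_smul, add_sub_cancel, one_smul]
    _ = e • S x := by rw [hloc, compl_part, add_zero]

end Idempotent

theorem isIdempotentElem_ind {A : Set Ω} (hA : MeasurableSet A) :
    IsIdempotentElem (ind P hA) := by
  rw [IsIdempotentElem, ind, AEEqFun.mk_mul_mk, AEEqFun.mk_eq_mk]
  refine .of_forall fun ω => ?_
  by_cases hω : ω ∈ A <;> simp [hω]

theorem ind_compl {A : Set Ω} (hA : MeasurableSet A) : ind P hA.compl = 1 - ind P hA := by
  rw [ind, ind, AEEqFun.one_def, ← AEEqFun.mk_sub, AEEqFun.mk_eq_mk]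
  refine .of_forall fun ω => ?_
  by_cases hω : ω ∈ A <;> simp [hω]

section Module

variable {M N : Type*} [AddCommGroup M] [Module (Ω →ₘ[P] ℝ) M]
  [AddCommGroup N] [Module (Ω →ₘ[P] ℝ) N]

variable (P) in
/-- The local property of a map between `L⁰`-modules: on each event `A`, the value `S x` depends
only on the restriction of `x` to `A`. -/
def HasLocalProperty (S : M → N) : Prop :=
  ∀ (x : M) (A : Set Ω) (hA : MeasurableSet A), ind P hA • S (ind P hA • x) = ind P hA • S x

variable (P) in
/-- An element of an `L⁰`-module has full support if it vanishes on no event of positive measure. -/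
def HasFullSupport (x : M) : Prop :=
  ∀ (A : Set Ω) (hA : MeasurableSet A), ind P hA • x = 0 → P A = 0

theorem HasLocalProperty.map_ind_smul {S : M → N} (hloc : HasLocalProperty P S) (hS0 : S 0 = 0)
    {A : Set Ω} (hA : MeasurableSet A) (x : M) : S (ind P hA • x) = ind P hA • S x :=
  map_smul_of_isIdempotentElem hS0 (isIdempotentElem_ind hA) (hloc · A hA)
    (fun y => by simpa only [ind_compl hA] using hloc y Aᶜ hA.compl) x

theorem image_has_full_support_general {S : M → N} (hloc : HasLocalProperty P S)
    (hS : ∀ y, S y = 0 ↔ y = 0) {x : M} (hx : HasFullSupport P x) : HasFullSupport P (S x) := by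
  intro A hA hSx
  rw [← hloc.map_ind_smul ((hS 0).2 rfl) hA, hS] at hSx
  exact hx A hA hSx

end Module

/-- from Step 1 of the proof of Theorem 3.1: an injective map
`S : (L⁰)ⁿ → (L⁰)ⁿ` with the local property and `S 0 = 0` maps elements with full
support to elements with full support. -/
theorem image_has_full_support
    [IsProbabilityMeasure P] (n : ℕ) (hn : 2 ≤ n)
    (S : (Fin n → Ω →ₘ[P] ℝ) → (Fin n → Ω →ₘ[P] ℝ))
    (hinj : Function.Injective S)
    (hloc : ∀ (x : Fin n → Ω →ₘ[P] ℝ) (A : Set Ω) (hA : MeasurableSet A),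
        ind P hA • S (ind P hA • x) = ind P hA • S x)
    (hS0 : S 0 = 0)
    (x : Fin n → Ω →ₘ[P] ℝ)
    (hx : ∀ (A : Set Ω) (hA : MeasurableSet A), ind P hA • x = 0 → P A = 0) :
    ∀ (A : Set Ω) (hA : MeasurableSet A), ind P hA • S x = 0 → P A = 0 :=
  image_has_full_support_general hloc (fun _ => hinj.eq_iff' hS0) hx
end
end

section
/- For an integer n ≥ 2, if T : (L^0)^n → (L^0)^n is a bijection which has the local property and maps each L^0-line segment onto an L^0-line segment (for any two distinct x, y ∈ (L^0)^n, the image of [x,y] under T equals [T(x), T(y)]), then T is an L^0-affine linear map. -/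
/-!
Statements from "The fundamental theorem of affine geometry in `(L⁰)ⁿ`" (Wu–Long).

`L⁰`, the algebra of equivalence classes (under `P`-a.e. equality) of real valued
random variables on a probability space `(Ω, F, P)`, is modeled as `Ω →ₘ[P] ℝ`,
and `(L⁰)ⁿ` as `Fin n → (Ω →ₘ[P] ℝ)` with the pointwise `L⁰`-module structure.
-/

open MeasureTheory

noncomputable section

variable {Ω : Type*} [MeasurableSpace Ω] {P : Measure Ω}

/-!
Over a von Neumann regular ring the local property transports every equation `c • x = c • y` along
`T` and `T⁻¹`. Since scalars can be cut along the sign of a given scalar, preservation of segments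
then extends to rays and to lines. If `d` and `z` generate independent cyclic submodules,
`x + d + z` is the midpoint of `x + 2d` and `x + 2z`, so its image lies in the plane through `T x`,
`T (x + d)` and `T (x + z)`; as `T⁻¹` also preserves lines, its coordinates there have to be `1`
and `1`. Two such parallelograms, sharing a second basis direction, show that `T` is additive along
a basis direction, and hence additive. Finally, writing `T (a • x) - T 0 = b • (T x - T 0)`,
preservation of rays forces `b` to have the sign of `a` wherever `x ≠ 0`; applying this to `a - q`
and `b - q` for all rational `q` gives `a = b` there, which is homogeneity.
-/

/-- Von Neumann regular ordered rings in which every element is cut by an idempotent into a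
nonnegative and a nonpositive part. Linearly ordered fields and `L⁰` are examples; these are the
algebraic properties of `L⁰` behind the additivity of segment-preserving maps. -/
class IsSignRegular (R : Type*) [CommRing R] [PartialOrder R] : Prop where
  exists_mul_mul_self_eq (a : R) : ∃ t : R, a * t * a = a
  exists_sign (a : R) : ∃ e : R, IsIdempotentElem e ∧ 0 ≤ e * a ∧ (1 - e) * a ≤ 0

namespace IsSignRegular

variable {R : Type*} [CommRing R] [PartialOrder R] [IsSignRegular R]

theorem exists_isIdempotentElem_mul (a : R) :
    ∃ t : R, IsIdempotentElem (t * a) ∧ a * (t * a) = a := by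
  obtain ⟨t, ht⟩ := exists_mul_mul_self_eq a
  exact ⟨t, by unfold IsIdempotentElem; linear_combination t * ht, by linear_combination ht⟩

variable [IsOrderedRing R]

protected theorem mul_self_nonneg (a : R) : 0 ≤ a * a := by
  obtain ⟨e, he, hpos, hneg⟩ := exists_sign a
  have split : a * a = e * a * (e * a) + (1 - e) * a * ((1 - e) * a) := by
    linear_combination (-2 * a * a) * he.eq
  rw [split]
  exact add_nonneg (mul_nonneg hpos hpos) (mul_nonneg_of_nonpos_of_nonpos hneg hneg)

theorem nonneg_of_isIdempotentElem {e : R} (he : IsIdempotentElem e) : 0 ≤ e :=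
  he.eq ▸ IsSignRegular.mul_self_nonneg e

theorem exists_nonneg_mul_mul_self_eq {a : R} (ha : 0 ≤ a) : ∃ t : R, 0 ≤ t ∧ a * t * a = a := by
  obtain ⟨t, ht⟩ := exists_mul_mul_self_eq a
  exact ⟨t * t * a, mul_nonneg (IsSignRegular.mul_self_nonneg t) ha,
    by linear_combination (a * t + 1) * ht⟩

theorem exists_mem_Icc_mul_eq_one {a : R} (ha : 1 ≤ a) : ∃ k ∈ Set.Icc (0 : R) 1, k * a = 1 := by
  obtain ⟨t, ht0, ht⟩ := exists_nonneg_mul_mul_self_eq (zero_le_one.trans ha)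
  have hidem : IsIdempotentElem (1 - t * a) := by
    unfold IsIdempotentElem
    linear_combination t * ht
  have hzero : (1 - t * a) * a = 0 := by linear_combination -ht
  have hnonneg := nonneg_of_isIdempotentElem hidem
  have hle : 1 - t * a ≤ 0 := hzero ▸ le_mul_of_one_le_right hnonneg ha
  have hinv : t * a = 1 := (sub_eq_zero.mp (hle.antisymm hnonneg)).symm
  exact ⟨t, ⟨ht0, hinv ▸ le_mul_of_one_le_right ht0 ha⟩, hinv⟩

end IsSignRegular

section DisjointSpans

variable {R M : Type*} [CommRing R] [AddCommGroup M] [Module R M] {d z : M}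

open Submodule

theorem smul_left_eq_zero_of_disjoint_span (hdz : Disjoint (R ∙ d) (R ∙ z)) {a b : R}
    (h : a • d + b • z = 0) : a • d = 0 := by
  refine disjoint_def.mp hdz _ (smul_mem _ a (mem_span_singleton_self d)) ?_
  exact mem_span_singleton.mpr ⟨-b, by linear_combination (norm := module) -h⟩

theorem disjoint_span_singleton_of_linearMap (φ : M →ₗ[R] R) (hd : φ d = 0)
    (hz : ∀ c : R, c * φ z = 0 → c • z = 0) : Disjoint (R ∙ d) (R ∙ z) := by
  refine disjoint_def.mpr fun v hvd hvz => ?_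
  obtain ⟨a, rfl⟩ := mem_span_singleton.mp hvd
  obtain ⟨c, hc⟩ := mem_span_singleton.mp hvz
  rw [← hc]
  apply hz
  simpa only [map_smul, hd, smul_eq_mul, mul_zero] using congrArg φ hc

end DisjointSpans

/-- Bijections between modules with the local property, phrased through idempotents of `R` (in `L⁰`
these are the classes of indicator functions), which map each segment onto the segment between the
images of its endpoints. Bundling `T` as an `Equiv` makes the notion symmetric in `T` and `T⁻¹`. -/
structure IsLocalSegmentEquiv (R : Type*) {M N : Type*} [CommRing R] [PartialOrder R]
    [AddCommGroup M] [Module R M] [AddCommGroup N] [Module R N] (T : M ≃ N) : Prop where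
  idempotent_smul_congr (e : R) (he : IsIdempotentElem e) (x y : M) (h : e • x = e • y) :
    e • T x = e • T y
  image_segment (x y : M) : T '' segment R x y = segment R (T x) (T y)

namespace IsLocalSegmentEquiv

open AffineMap IsSignRegular Set

variable {R M N : Type*} [CommRing R] [PartialOrder R] [AddCommGroup M] [Module R M]
  [AddCommGroup N] [Module R N] {T : M ≃ N}

theorem idempotent_smul_congr_symm (hT : IsLocalSegmentEquiv R T) {e : R}
    (he : IsIdempotentElem e) {x y : M} (h : e • T x = e • T y) : e • x = e • y := by
  have agree_x : e • T (e • x + (1 - e) • y) = e • T x :=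
    hT.idempotent_smul_congr e he _ _ (by linear_combination (norm := module) he.eq • (x - y))
  have agree_y : (1 - e) • T (e • x + (1 - e) • y) = (1 - e) • T y :=
    hT.idempotent_smul_congr _ he.one_sub _ _
      (by linear_combination (norm := module) he.eq • (y - x))
  have glued : e • x + (1 - e) • y = y :=
    T.injective (by linear_combination (norm := module) agree_x + agree_y + h)
  linear_combination (norm := module) glued

theorem symm (hT : IsLocalSegmentEquiv R T) : IsLocalSegmentEquiv R T.symm where
  idempotent_smul_congr e he x y h := hT.idempotent_smul_congr_symm he (by simpa using h)
  image_segment x y := by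
    rw [Equiv.image_symm_eq_preimage, ← T.injective.preimage_image (segment R (T.symm x) _),
      hT.image_segment, T.apply_symm_apply, T.apply_symm_apply]

theorem exists_lineMap_of_mem_Icc [IsOrderedAddMonoid R] (hT : IsLocalSegmentEquiv R T)
    (x y : M) {l : R} (hl : l ∈ Icc 0 1) :
    ∃ m ∈ Icc (0 : R) 1, T (lineMap x y l) = lineMap (T x) (T y) m := by
  have hmem : T (lineMap x y l) ∈ T '' segment R x y := by
    rw [segment_eq_image_lineMap]
    exact mem_image_of_mem T (mem_image_of_mem _ hl)
  rw [hT.image_segment, segment_eq_image_lineMap] at hmem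
  obtain ⟨m, hm, hTm⟩ := hmem
  exact ⟨m, hm, hTm.symm⟩

variable [IsSignRegular R]

theorem smul_congr (hT : IsLocalSegmentEquiv R T) (c : R) {x y : M} (h : c • x = c • y) :
    c • T x = c • T y := by
  obtain ⟨t, he, hc⟩ := exists_isIdempotentElem_mul c
  have key := hT.idempotent_smul_congr (t * c) he x y (by rw [mul_smul, h, mul_smul])
  rw [← hc, mul_smul, key, ← mul_smul]

theorem smul_eq_smul_of_smul_map_eq (hT : IsLocalSegmentEquiv R T) (c : R) {x y : M}
    (h : c • T x = c • T y) : c • x = c • y := by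
  simpa only [T.symm_apply_apply] using hT.symm.smul_congr c h

theorem map_lineMap_glue (hT : IsLocalSegmentEquiv R T) {x y : M} {e l l₁ l₂ m₁ m₂ : R}
    (h₁ : e * l = e * l₁) (h₂ : (1 - e) * l = (1 - e) * l₂)
    (hm₁ : T (lineMap x y l₁) = lineMap (T x) (T y) m₁)
    (hm₂ : T (lineMap x y l₂) = lineMap (T x) (T y) m₂) :
    T (lineMap x y l) = lineMap (T x) (T y) (e * m₁ + (1 - e) * m₂) := by
  have agree₁ := hT.smul_congr e (x := lineMap x y l) (y := lineMap x y l₁) (by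
    simp only [lineMap_apply_module']
    linear_combination (norm := module) h₁ • (y - x))
  have agree₂ := hT.smul_congr (1 - e) (x := lineMap x y l) (y := lineMap x y l₂) (by
    simp only [lineMap_apply_module']
    linear_combination (norm := module) h₂ • (y - x))
  rw [hm₁, lineMap_apply_module' (T x)] at agree₁
  rw [hm₂, lineMap_apply_module' (T x)] at agree₂
  rw [lineMap_apply_module' (T x)]
  linear_combination (norm := module) agree₁ + agree₂

variable [IsOrderedRing R]

-- `y` lies on the segment from `x` to `lineMap x y l`; the resulting equation is solved for the
-- image of the latter, which is possible because `T` and `T⁻¹` are local.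
theorem exists_lineMap_of_one_le (hT : IsLocalSegmentEquiv R T) (x y : M) {l : R} (hl : 1 ≤ l) :
    ∃ m : R, 0 ≤ m ∧ T (lineMap x y l) = lineMap (T x) (T y) m := by
  obtain ⟨k, hk, hkl⟩ := exists_mem_Icc_mul_eq_one hl
  obtain ⟨v, ⟨hv0, -⟩, hv⟩ := hT.exists_lineMap_of_mem_Icc x (lineMap x y l) hk
  rw [lineMap_lineMap_right, hkl, lineMap_apply_one, lineMap_apply_module'] at hv
  obtain ⟨r, hr0, hr⟩ := exists_nonneg_mul_mul_self_eq hv0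
  have agree_map_y : (1 - r * v) • T y = (1 - r * v) • T x := by
    rw [hv]
    linear_combination (norm := module) (-hr) • (T (lineMap x y l) - T x)
  have agree_y := hT.smul_eq_smul_of_smul_map_eq _ agree_map_y
  have agree_map := hT.smul_congr (1 - r * v) (x := lineMap x y l) (y := x) (by
    rw [lineMap_apply_module']
    linear_combination (norm := module) l • agree_y)
  refine ⟨r, hr0, ?_⟩
  rw [lineMap_apply_module' (T x), hv]
  linear_combination (norm := module) agree_map

theorem exists_lineMap_of_nonneg (hT : IsLocalSegmentEquiv R T) (x y : M) {l : R} (hl : 0 ≤ l) :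
    ∃ m : R, 0 ≤ m ∧ T (lineMap x y l) = lineMap (T x) (T y) m := by
  obtain ⟨e, he, hge, hle⟩ := exists_sign (l - 1)
  have he0 : 0 ≤ e := nonneg_of_isIdempotentElem he
  have he1 : 0 ≤ 1 - e := nonneg_of_isIdempotentElem he.one_sub
  have hsmall : 1 + (1 - e) * (l - 1) ∈ Icc 0 1 := by
    refine ⟨?_, by simpa using hle⟩
    rw [show 1 + (1 - e) * (l - 1) = e + (1 - e) * l by ring]
    exact add_nonneg he0 (mul_nonneg he1 hl)
  have hlarge : 1 ≤ 1 + e * (l - 1) := by simpa using hge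
  obtain ⟨m₁, hm₁0, hm₁⟩ := hT.exists_lineMap_of_one_le x y hlarge
  obtain ⟨m₂, ⟨hm₂0, -⟩, hm₂⟩ := hT.exists_lineMap_of_mem_Icc x y hsmall
  exact ⟨e * m₁ + (1 - e) * m₂, add_nonneg (mul_nonneg he0 hm₁0) (mul_nonneg he1 hm₂0),
    hT.map_lineMap_glue (by linear_combination (1 - l) * he.eq)
      (by linear_combination (1 - l) * he.eq) hm₁ hm₂⟩

theorem exists_lineMap (hT : IsLocalSegmentEquiv R T) (x y : M) (l : R) :
    ∃ m : R, T (lineMap x y l) = lineMap (T x) (T y) m := by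
  obtain ⟨e, he, hpos, hneg⟩ := exists_sign l
  obtain ⟨m₁, -, hm₁⟩ := hT.exists_lineMap_of_nonneg x y hpos
  have hlarge : 1 ≤ 1 - (1 - e) * l := by simpa using hneg
  obtain ⟨m₂, -, hm₂⟩ := hT.exists_lineMap_of_one_le y x hlarge
  rw [lineMap_apply_one_sub, ← lineMap_apply_one_sub (T x)] at hm₂
  exact ⟨_, hT.map_lineMap_glue (e := e) (by linear_combination -l * he.eq)
    (by linear_combination -l * he.eq) hm₁ hm₂⟩

theorem exists_coeff_parallelogram (hT : IsLocalSegmentEquiv R T) (x d z : M) :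
    ∃ a b : R, T (x + d + z) - T x = a • (T (x + d) - T x) + b • (T (x + z) - T x) := by
  obtain ⟨h, -, hh⟩ := exists_mem_Icc_mul_eq_one (one_le_two (α := R))
  obtain ⟨p, hp⟩ := hT.exists_lineMap x (x + d) 2
  obtain ⟨q, hq⟩ := hT.exists_lineMap x (x + z) 2
  obtain ⟨m, hm⟩ := hT.exists_lineMap (lineMap x (x + d) (2 : R)) (lineMap x (x + z) (2 : R)) h
  have hmid : lineMap (lineMap x (x + d) (2 : R)) (lineMap x (x + z) (2 : R)) h = x + d + z := by
    simp only [lineMap_apply_module']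
    linear_combination (norm := module) hh • (z - d)
  rw [hmid, hp, hq] at hm
  refine ⟨(1 - m) * p, m * q, ?_⟩
  simp only [hm, lineMap_apply_module']
  module

-- If `a ≠ 1`, the lines through `T (x + d)`, `T (x + d + z)` and through `T x`, `T (x + z)` meet,
-- whereas their preimages are parallel. Here `-t` is the parameter of the intersection point.
theorem parallelogram_coeff_smul (hT : IsLocalSegmentEquiv R T) {x d z : M}
    (hdz : Disjoint (R ∙ d) (R ∙ z)) {a b : R}
    (h : T (x + d + z) - T x = a • (T (x + d) - T x) + b • (T (x + z) - T x)) :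
    a • (T (x + d) - T x) = T (x + d) - T x := by
  obtain ⟨t, ht⟩ := exists_mul_mul_self_eq (a - 1)
  obtain ⟨s, hs⟩ := hT.symm.exists_lineMap (T (x + d)) (T (x + d + z)) (-t)
  obtain ⟨r, hr⟩ := hT.symm.exists_lineMap (T x) (T (x + z)) (-t * b)
  have meet : (a - 1) • lineMap (T (x + d)) (T (x + d + z)) (-t) =
      (a - 1) • lineMap (T x) (T (x + z)) (-t * b) := by
    simp only [lineMap_apply_module']
    linear_combination (norm := module) (-ht) • (T (x + d) - T x) - ((a - 1) * t) • h
  have preimages_agree := hT.symm.smul_congr _ meet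
  rw [hs, hr] at preimages_agree
  simp only [T.symm_apply_apply, lineMap_apply_module'] at preimages_agree
  have hd : (a - 1) • d = 0 := smul_left_eq_zero_of_disjoint_span (b := (a - 1) * (s - r)) hdz
    (by linear_combination (norm := module) preimages_agree)
  have hTd := hT.smul_congr (a - 1) (x := x + d) (y := x) (by rw [smul_add, hd, add_zero])
  linear_combination (norm := module) hTd

theorem map_add_add_sub_map_add (hT : IsLocalSegmentEquiv R T) (x : M) {d z : M}
    (hdz : Disjoint (R ∙ d) (R ∙ z)) : T (x + d + z) - T (x + z) = T (x + d) - T x := by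
  obtain ⟨a, b, hab⟩ := hT.exists_coeff_parallelogram x d z
  have ha := hT.parallelogram_coeff_smul hdz hab
  have hb := hT.parallelogram_coeff_smul (x := x) (a := b) (b := a) hdz.symm
    (by rw [add_right_comm, hab, add_comm])
  linear_combination (norm := module) hab + ha + hb

theorem idempotent_mul_coeff_mul_sq_nonneg (hT : IsLocalSegmentEquiv R T) (φ : M →ₗ[R] R) {x : M}
    {a b e : R} (h : T (a • x) - T 0 = b • (T x - T 0)) (he : IsIdempotentElem e)
    (hea : 0 ≤ e * a) : 0 ≤ e * b * (φ x * φ x) := by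
  obtain ⟨v, hv0, hv⟩ := hT.exists_lineMap_of_nonneg 0 x hea
  simp only [lineMap_apply_module', sub_zero, add_zero] at hv
  have agree := hT.smul_congr e (x := a • x) (y := (e * a) • x)
    (by linear_combination (norm := module) (-he.eq) • (a • x))
  have hTx : (e * (b - v)) • T x = (e * (b - v)) • T 0 := by
    linear_combination (norm := module) agree + e • hv - e • h
  have hx := hT.smul_eq_smul_of_smul_map_eq _ hTx
  have hφ : e * (b - v) * φ x = 0 := by simpa using congrArg φ hx
  rw [show e * b * (φ x * φ x) = e * v * (φ x * φ x) by linear_combination φ x * hφ]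
  exact mul_nonneg (mul_nonneg (nonneg_of_isIdempotentElem he) hv0)
    (IsSignRegular.mul_self_nonneg _)

variable {ι : Type*} [Nontrivial ι]

theorem map_add_smul_basis_sub (hT : IsLocalSegmentEquiv R T) (b : Module.Basis ι R M)
    (x : M) (a : R) (i : ι) : T (x + a • b i) - T x = T (a • b i) - T 0 := by
  obtain ⟨j, hji⟩ := exists_ne i
  have hcoord : b.coord j (a • b i) = 0 := by simp [hji.symm]
  -- Translate `x` along `b j` so that its `j`-th coordinate becomes `1`.
  set z := (1 - b.coord j x) • b j with hz
  have hxz : b.coord j (x + z) = 1 := by simp [hz]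
  have shift := hT.map_add_add_sub_map_add x
    (disjoint_span_singleton_of_linearMap (z := z) (b.coord j) hcoord fun c hc => by
      have : c * (1 - b.coord j x) = 0 := by simpa [hz] using hc
      rw [hz, smul_smul, this, zero_smul])
  have base := hT.map_add_add_sub_map_add 0
    (disjoint_span_singleton_of_linearMap (z := x + z) (b.coord j) hcoord fun c hc => by
      rw [hxz, mul_one] at hc
      rw [hc, zero_smul])
  rw [← shift, ← zero_add (a • b i), ← base]
  congr 2 <;> abel_nf

theorem map_add_sub_map (hT : IsLocalSegmentEquiv R T) (b : Module.Basis ι R M) (x y : M) :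
    T (x + y) - T x = T y - T 0 := by
  obtain ⟨f, rfl⟩ := b.repr.symm.surjective y
  induction f using Finsupp.induction_linear generalizing x with
  | zero => simp
  | add f g hf hg =>
    rw [map_add b.repr.symm, ← add_assoc]
    linear_combination (norm := module) hg (x + b.repr.symm f) + hf x - hg (b.repr.symm f)
  | single i a => simpa using hT.map_add_smul_basis_sub b x a i

theorem map_add_sub (hT : IsLocalSegmentEquiv R T) (b : Module.Basis ι R M) (x y : M) :
    T (x + y) - T 0 = (T x - T 0) + (T y - T 0) := by
  linear_combination (norm := module) hT.map_add_sub_map b x y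

theorem mul_coeff_mul_sq_nonneg (hT : IsLocalSegmentEquiv R T) (B : Module.Basis ι R M)
    (φ : M →ₗ[R] R) {x : M} {a b : R} (h : T (a • x) - T 0 = b • (T x - T 0)) :
    0 ≤ a * b * (φ x * φ x) := by
  obtain ⟨e, he, hpos, hneg⟩ := exists_sign a
  have hopp : T (-a • x) - T 0 = -b • (T x - T 0) := by
    have hadd := hT.map_add_sub B (a • x) (-a • x)
    rw [show a • x + -a • x = 0 by module] at hadd
    linear_combination (norm := module) -hadd - h
  have on_pos := hT.idempotent_mul_coeff_mul_sq_nonneg φ h he hpos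
  have hneg' : 0 ≤ (1 - e) * -a := by simpa only [mul_neg, neg_nonneg] using hneg
  have on_neg := hT.idempotent_mul_coeff_mul_sq_nonneg φ hopp he.one_sub hneg'
  have split : a * b * (φ x * φ x) = e * a * (e * b * (φ x * φ x)) +
      (1 - e) * -a * ((1 - e) * -b * (φ x * φ x)) := by
    linear_combination (-2 * a * b * (φ x * φ x)) * he.eq
  rw [split]
  exact add_nonneg (mul_nonneg hpos on_pos) (mul_nonneg hneg' on_neg)

end IsLocalSegmentEquiv

section LZero

theorem coeFn_ind {A : Set Ω} (hA : MeasurableSet A) :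
    ind P hA =ᵐ[P] A.indicator fun _ => (1 : ℝ) :=
  AEEqFun.coeFn_mk _ _

instance : IsOrderedAddMonoid (Ω →ₘ[P] ℝ) where
  add_le_add_left a b hab c := by
    rw [← AEEqFun.coeFn_le] at hab ⊢
    filter_upwards [hab, AEEqFun.coeFn_add a c, AEEqFun.coeFn_add b c] with ω h hac hbc
    simpa [hac, hbc] using h

instance : ZeroLEOneClass (Ω →ₘ[P] ℝ) where
  zero_le_one := (AEEqFun.mk_le_mk _ _).mpr (.of_forall fun _ => zero_le_one)

theorem nonneg_iff_ae_nonneg (a : Ω →ₘ[P] ℝ) : 0 ≤ a ↔ ∀ᵐ ω ∂P, 0 ≤ a ω := by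
  rw [← AEEqFun.coeFn_le]
  exact Filter.eventually_congr (AEEqFun.coeFn_zero.mono fun ω h => by rw [h, Pi.zero_apply])

instance : IsOrderedRing (Ω →ₘ[P] ℝ) :=
  .of_mul_nonneg fun a b ha hb => by
    rw [nonneg_iff_ae_nonneg] at ha hb ⊢
    filter_upwards [ha, hb, AEEqFun.coeFn_mul a b] with ω ha hb hab
    exact hab ▸ mul_nonneg ha hb

theorem exists_ind_eq_of_isIdempotentElem {e : Ω →ₘ[P] ℝ} (he : IsIdempotentElem e) :
    ∃ (A : Set Ω) (hA : MeasurableSet A), ind P hA = e := by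
  have hA : MeasurableSet {ω | e ω = 1} := measurableSet_eq_fun e.measurable measurable_const
  refine ⟨_, hA, AEEqFun.ext ?_⟩
  filter_upwards [AEEqFun.coeFn_mul e e, coeFn_ind (P := P) hA] with ω hmul hind
  rw [he.eq, Pi.mul_apply] at hmul
  rcases IsIdempotentElem.iff_eq_zero_or_one.mp hmul.symm with h | h <;> simp [hind, h]

instance : IsSignRegular (Ω →ₘ[P] ℝ) where
  exists_mul_mul_self_eq a := by
    induction a using AEEqFun.induction_on with | _ f hf =>
    refine ⟨AEEqFun.mk f⁻¹ hf.aemeasurable.inv.aestronglyMeasurable, ?_⟩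
    rw [AEEqFun.mk_mul_mk, AEEqFun.mk_mul_mk]
    exact AEEqFun.mk_eq_mk.mpr (.of_forall fun ω => mul_inv_mul_cancel (f ω))
  exists_sign a := by
    have hA : MeasurableSet {ω | 0 ≤ a ω} := measurableSet_le measurable_const a.measurable
    refine ⟨ind P hA, isIdempotentElem_ind hA, ?_, ?_⟩
    · rw [nonneg_iff_ae_nonneg]
      filter_upwards [AEEqFun.coeFn_mul (ind P hA) a, coeFn_ind (P := P) hA] with ω hmul hind
      by_cases h : 0 ≤ a ω <;> simp [hmul, hind, h]
    · rw [sub_mul, one_mul, sub_nonpos, ← AEEqFun.coeFn_le]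
      filter_upwards [AEEqFun.coeFn_mul (ind P hA) a, coeFn_ind (P := P) hA] with ω hmul hind
      by_cases h : 0 ≤ a ω
      · simp [hmul, hind, h]
      · simp [hmul, hind, h, le_of_not_ge h]

theorem eq_of_forall_int_mul_sub_mul_nonneg {a b : ℝ}
    (h : ∀ n p : ℤ, 0 ≤ (n * a - p) * (n * b - p)) : a = b := by
  wlog hab : a ≤ b generalizing a b
  · exact (this (fun n p => mul_comm (n * a - p : ℝ) _ ▸ h n p) (le_of_not_ge hab)).symm
  by_contra hne
  obtain ⟨q, haq, hqb⟩ := exists_rat_btwn (hab.lt_of_ne hne)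
  have hden : (0 : ℝ) < q.den := mod_cast q.pos
  rw [Rat.cast_def, lt_div_iff₀' hden] at haq
  rw [Rat.cast_def, div_lt_iff₀' hden] at hqb
  have := h q.den q.num
  push_cast at this
  exact this.not_gt (mul_neg_of_neg_of_pos (sub_neg.mpr haq) (sub_pos.mpr hqb))

theorem sub_mul_eq_zero_of_forall_int {a b c : Ω →ₘ[P] ℝ}
    (h : ∀ n p : ℤ, 0 ≤ (n • a - p • 1) * (n • b - p • 1) * (c * c)) : (a - b) * c = 0 := by
  have hae : ∀ᵐ ω ∂P, ∀ n p : ℤ, 0 ≤ (n * a ω - p) * (n * b ω - p) * (c ω * c ω) := by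
    refine ae_all_iff.mpr fun n => ae_all_iff.mpr fun p => ?_
    filter_upwards [(nonneg_iff_ae_nonneg _).mp (h n p),
      AEEqFun.coeFn_mul ((n • a - p • 1) * (n • b - p • 1)) (c * c), AEEqFun.coeFn_mul c c,
      AEEqFun.coeFn_mul (n • a - p • 1) (n • b - p • 1),
      AEEqFun.coeFn_sub (n • a) (p • 1), AEEqFun.coeFn_sub (n • b) (p • 1),
      AEEqFun.coeFn_smul n a, AEEqFun.coeFn_smul n b,
      AEEqFun.coeFn_smul p (1 : Ω →ₘ[P] ℝ), AEEqFun.coeFn_one (α := Ω) (μ := P) (β := ℝ)]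
      with ω hω hmul hcc hmul' hsuba hsubb hna hnb hp hone
    simp only [hmul, hcc, hmul', hsuba, hsubb, hna, hnb, hp, hone, Pi.mul_apply, Pi.sub_apply,
      Pi.smul_apply, Pi.one_apply] at hω
    simpa only [zsmul_eq_mul, mul_one] using hω
  refine AEEqFun.ext ?_
  filter_upwards [hae, AEEqFun.coeFn_mul (a - b) c, AEEqFun.coeFn_sub a b,
    AEEqFun.coeFn_zero (α := Ω) (μ := P) (β := ℝ)] with ω hω hmul hsub hzero
  rw [hmul, hzero, Pi.mul_apply, hsub, Pi.sub_apply, Pi.zero_apply, mul_eq_zero, sub_eq_zero]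
  by_cases hc : c ω = 0
  · exact .inr hc
  · exact .inl (eq_of_forall_int_mul_sub_mul_nonneg fun n p =>
      nonneg_of_mul_nonneg_left (hω n p) (mul_self_pos.mpr hc))

variable {ι M N : Type*} [Nontrivial ι] [AddCommGroup M] [Module (Ω →ₘ[P] ℝ) M]
  [AddCommGroup N] [Module (Ω →ₘ[P] ℝ) N]

theorem IsLocalSegmentEquiv.map_smul_sub {T : M ≃ N} (hT : IsLocalSegmentEquiv (Ω →ₘ[P] ℝ) T)
    (b : Module.Basis ι (Ω →ₘ[P] ℝ) M) (l : Ω →ₘ[P] ℝ) (x : M) :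
    T (l • x) - T 0 = l • (T x - T 0) := by
  let U : M →+ N := AddMonoidHom.mk' (fun y => T y - T 0) (hT.map_add_sub b)
  obtain ⟨m, hm⟩ := hT.exists_lineMap 0 x l
  simp only [AffineMap.lineMap_apply_module', sub_zero, add_zero] at hm
  have hUm : U (l • x) = m • U x := sub_eq_of_eq_add hm
  have hU (n p : ℤ) : U ((n • l - p • 1) • x) = (n • m - p • 1) • U x := by
    rw [sub_smul, map_sub, smul_assoc, map_zsmul, hUm, smul_assoc, one_smul, map_zsmul, sub_smul,
      smul_assoc, smul_assoc, one_smul]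
  have hlm : (l - m) • x = 0 := b.ext_elem fun i => by
    simpa using sub_mul_eq_zero_of_forall_int fun n p =>
      hT.mul_coeff_mul_sq_nonneg b (b.coord i) (hU n p)
  have hTlm := hT.smul_congr (l - m) (x := x) (y := 0) (by rw [hlm, smul_zero])
  linear_combination (norm := module) hm - hTlm

theorem isLocalSegmentEquiv_ofBijective {T : M → N} (hbij : Function.Bijective T)
    (hloc : ∀ (x : M) (A : Set Ω) (hA : MeasurableSet A),
      ind P hA • T (ind P hA • x) = ind P hA • T x)
    (hseg : ∀ x y : M, x ≠ y →
      T '' segment (Ω →ₘ[P] ℝ) x y = segment (Ω →ₘ[P] ℝ) (T x) (T y)) :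
    IsLocalSegmentEquiv (Ω →ₘ[P] ℝ) (Equiv.ofBijective T hbij) where
  idempotent_smul_congr e he x y h := by
    obtain ⟨A, hA, rfl⟩ := exists_ind_eq_of_isIdempotentElem he
    rw [Equiv.ofBijective_apply, Equiv.ofBijective_apply, ← hloc x A hA, h, hloc y A hA]
  image_segment x y := by
    rcases eq_or_ne x y with rfl | hxy
    · simp [segment_same]
    · exact hseg x y hxy

theorem segment_preserving_bijection_is_affine_general
    (b : Module.Basis ι (Ω →ₘ[P] ℝ) M) {T : M → N} (hbij : Function.Bijective T)
    (hloc : ∀ (x : M) (A : Set Ω) (hA : MeasurableSet A),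
      ind P hA • T (ind P hA • x) = ind P hA • T x)
    (hseg : ∀ x y : M, x ≠ y →
      T '' segment (Ω →ₘ[P] ℝ) x y = segment (Ω →ₘ[P] ℝ) (T x) (T y)) :
    (∀ x y : M, T (x + y) - T 0 = (T x - T 0) + (T y - T 0)) ∧
      ∀ (ξ : Ω →ₘ[P] ℝ) (x : M), T (ξ • x) - T 0 = ξ • (T x - T 0) :=
  have hT := isLocalSegmentEquiv_ofBijective hbij hloc hseg
  ⟨hT.map_add_sub b, hT.map_smul_sub b⟩

end LZero

theorem segment_eq_setOf_smul_add_one_sub_smul {R M : Type*} [Ring R] [PartialOrder R]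
    [IsOrderedAddMonoid R] [AddCommGroup M] [Module R M] (x y : M) :
    segment R x y = {z | ∃ l : R, 0 ≤ l ∧ l ≤ 1 ∧ z = l • x + (1 - l) • y} := by
  rw [segment_symm, segment_eq_image]
  ext z
  simp only [Set.mem_image, Set.mem_Icc, Set.mem_ofPred_eq, and_assoc, add_comm, eq_comm]

/-- Corollary 3.7: for `n ≥ 2`, a bijection `T : (L⁰)ⁿ → (L⁰)ⁿ` with
the local property which maps each `L⁰`-line segment onto an `L⁰`-line segment must be
an `L⁰`-affine linear map. -/
theorem segment_preserving_bijection_is_affine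
    [IsProbabilityMeasure P] (n : ℕ) (hn : 2 ≤ n)
    (T : (Fin n → Ω →ₘ[P] ℝ) → (Fin n → Ω →ₘ[P] ℝ))
    (hbij : Function.Bijective T)
    (hloc : ∀ (x : Fin n → Ω →ₘ[P] ℝ) (A : Set Ω) (hA : MeasurableSet A),
        ind P hA • T (ind P hA • x) = ind P hA • T x)
    (hseg : ∀ x y : Fin n → Ω →ₘ[P] ℝ, x ≠ y →
        T '' {z | ∃ lam : Ω →ₘ[P] ℝ, 0 ≤ lam ∧ lam ≤ 1 ∧ z = lam • x + (1 - lam) • y}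
          = {z | ∃ lam : Ω →ₘ[P] ℝ, 0 ≤ lam ∧ lam ≤ 1 ∧
              z = lam • T x + (1 - lam) • T y}) :
    (∀ x y : Fin n → Ω →ₘ[P] ℝ,
        T (x + y) - T 0 = (T x - T 0) + (T y - T 0)) ∧
    (∀ (ξ : Ω →ₘ[P] ℝ) (x : Fin n → Ω →ₘ[P] ℝ),
        T (ξ • x) - T 0 = ξ • (T x - T 0)) := by
  have : Nontrivial (Fin n) := Fin.nontrivial_iff_two_le.mpr hn
  exact segment_preserving_bijection_is_affine_general (Pi.basisFun _ (Fin n)) hbij hloc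
    (by simpa only [segment_eq_setOf_smul_add_one_sub_smul] using hseg)
end
end
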